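/- If integers X, Y, Z satisfy X + Y + Z = 3 and X^3 + Y^3 + Z^3 = 3, and Z is the (a) negative one among the three, then Z - 3 divides 8; consequently if Z < 0 then Z = -5 or Z = -1. -/

import Mathlib

/-!
Cubing `X + Y + Z = 3` and subtracting the sum of cubes gives `(X + Y) * (Y + Z) * (Z + X) = 8`,
so `3 - Z = X + Y` is a divisor of `8`, and it exceeds `3` when `Z` is negative.
-/

section CommRing

variable {R : Type*} [CommRing R] {x y z t : R}

theorem add_add_pow_three (x y z : R) :
    (x + y + z) ^ 3 = x ^ 3 + y ^ 3 + z ^ 3 + 3 * ((x + y) * (y + z) * (z + x)) := by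
  ring

theorem add_dvd_of_add_add_pow_three_eq (h_three : IsLeftRegular (3 : R))
    (h : (x + y + z) ^ 3 = x ^ 3 + y ^ 3 + z ^ 3 + 3 * t) : x + y ∣ t := by
  have h_mul : 3 * t = 3 * ((x + y) * (y + z) * (z + x)) :=
    add_left_cancel (h.symm.trans (add_add_pow_three x y z))
  have h_prod : t = (x + y) * ((y + z) * (z + x)) := by
    rw [h_three h_mul, mul_assoc]
  exact Dvd.intro _ h_prod.symm

end CommRing

theorem eq_four_or_eq_eight_of_dvd_eight {d : ℤ} (h_dvd : d ∣ 8) (h_lt : 3 < d) :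
    d = 4 ∨ d = 8 := by
  have h_le : d ≤ 8 := Int.le_of_dvd (by norm_num) h_dvd
  interval_cases d <;> omega

theorem stmt4 (X Y Z : ℤ) (h1 : X + Y + Z = 3) (h2 : X^3 + Y^3 + Z^3 = 3)
    (h3 : Z < 0) : (Z - 3) ∣ 8 ∧ (Z = -5 ∨ Z = -1) := by
  have h_cube : (X + Y + Z) ^ 3 = X ^ 3 + Y ^ 3 + Z ^ 3 + 3 * 8 := by
    rw [h1, h2]
    norm_num
  have h_add_dvd : X + Y ∣ 8 :=
    add_dvd_of_add_add_pow_three_eq (mul_right_injective₀ three_ne_zero) h_cube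
  have h_dvd : 3 - Z ∣ 8 := by
    rwa [← h1, add_sub_cancel_right]
  refine ⟨by rwa [← neg_sub, neg_dvd], ?_⟩
  have h_cases : 3 - Z = 4 ∨ 3 - Z = 8 :=
    eq_four_or_eq_eight_of_dvd_eight h_dvd (by linarith)
  omega
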